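/- Let A ∈ ℝ^{m×n}, let x* ∈ ℝⁿ be k-sparse, and let y = Ax* (accurate measurements). Let q ≥ 2k be a positive integer, set t = ⌈q/k⌉, and let δ₁ ≤ δ₂ ≤ δ₃ be restricted isometry constants of orders k, 2k, 3k for A. Suppose δ₃ < α*, where α* is the unique root in (0,1) of (t+1)²α³ + (t+1)²α² + (2/(3+√5))α − 2/(3+√5) = 0. Then every PGOT sequence (x^p) for (A, y, k, q) converges to x* as p → ∞. -/

import Mathlib

/-!
Write `v = xs - x p` for the error and `z = Aᵀ A v` for the gradient step. The restricted isometry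
property of order `3k` says that `AᵀA` is `δ`-close to the identity on any set of `3k` indices
containing the support of `v` (`sum_sub_sq_le`).

Let `S ⊇ supp xs` have `k` elements and let `Ω` be the set of `q ≥ 2k` largest entries of `z`.
The entries of `z` on `S \ Ω` are dominated by those on a set `T ⊆ Ω` of the same size, disjoint
from `S` and from the support of `x p`; such a `T` exists because `q ≥ 2k`. As `v` vanishes on `T`,
`∑_T z² = ∑_T (v - z)²`, and `‖(v - h)_S‖² ≤ 2 ‖(v - z)_{S ∪ T}‖² ≤ 2 δ² ‖v‖²`
(`sum_threshold_le`). Comparing the optimal selection `w` with the indicator of `S` yields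
`(1 - δ) ‖xs - x (p+1)‖² ≤ 2 δ² (1 + δ) ‖xs - x p‖²`, and the cubic condition on `δ`, with
`t ≥ 2`, makes this a strict contraction.
-/

open Matrix Finset Filter

/-- Euclidean (ℓ₂) norm of a vector. -/
noncomputable def nrm {n : ℕ} (x : Fin n → ℝ) : ℝ := Real.sqrt (∑ i, x i ^ 2)

/-- A vector is `s`-sparse if it has at most `s` nonzero entries. -/
def sparse {n : ℕ} (s : ℕ) (x : Fin n → ℝ) : Prop :=
  ((Finset.univ : Finset (Fin n)).filter fun i => x i ≠ 0).card ≤ s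

/-- Support of a vector, as a finset. -/
noncomputable def suppF {n : ℕ} (x : Fin n → ℝ) : Finset (Fin n) :=
  (Finset.univ : Finset (Fin n)).filter fun i => x i ≠ 0

/-- Restriction of a vector to an index set (zero outside). -/
def restr {n : ℕ} (x : Fin n → ℝ) (Ω : Finset (Fin n)) : Fin n → ℝ :=
  fun i => if i ∈ Ω then x i else 0

/-- `δ ∈ [0,1)` is a restricted isometry constant of order `s` for `A`. -/
def RIC {m n : ℕ} (A : Matrix (Fin m) (Fin n) ℝ) (s : ℕ) (δ : ℝ) : Prop :=
  0 ≤ δ ∧ δ < 1 ∧ ∀ x : Fin n → ℝ, sparse s x →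
    (1 - δ) * nrm x ^ 2 ≤ nrm (A.mulVec x) ^ 2 ∧
      nrm (A.mulVec x) ^ 2 ≤ (1 + δ) * nrm x ^ 2

/-- `h` is a hard thresholding of `z` at level `q` with support `Ω`. -/
def IsHT {n : ℕ} (q : ℕ) (z h : Fin n → ℝ) (Ω : Finset (Fin n)) : Prop :=
  Ω.card = q ∧ (∀ i ∈ Ω, h i = z i) ∧ (∀ i ∉ Ω, h i = 0) ∧
    ∀ i ∈ Ω, ∀ j ∉ Ω, |z j| ≤ |z i|

/-- A PGOT iterate sequence for `(A, y, k, q)`. -/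
def IsPGOTSeq {m n : ℕ} (A : Matrix (Fin m) (Fin n) ℝ) (y : Fin m → ℝ) (k q : ℕ)
    (x : ℕ → Fin n → ℝ) : Prop :=
  x 0 = 0 ∧ ∀ p : ℕ, ∃ (h : Fin n → ℝ) (Ω : Finset (Fin n)) (w : Fin n → ℝ),
    IsHT q (Aᵀ.mulVec (y - A.mulVec (x p))) h Ω ∧
    (∀ i, w i = 0 ∨ w i = 1) ∧ (∑ i, w i) = (k : ℝ) ∧
    (∀ w' : Fin n → ℝ, (∀ i, w' i = 0 ∨ w' i = 1) → (∑ i, w' i) = (k : ℝ) →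
      nrm (y - A.mulVec (fun i => (x p i + h i) * w i)) ^ 2 ≤
        nrm (y - A.mulVec (fun i => (x p i + h i) * w' i)) ^ 2) ∧
    x (p + 1) = fun i => (x p i + h i) * w i

lemma nrm_sq {n : ℕ} (x : Fin n → ℝ) : nrm x ^ 2 = ∑ i, x i ^ 2 :=
  Real.sq_sqrt (Finset.sum_nonneg fun _ _ => sq_nonneg _)

lemma nrm_sq_dot {n : ℕ} (x : Fin n → ℝ) : nrm x ^ 2 = x ⬝ᵥ x := by
  rw [nrm_sq]; simp [dotProduct, sq]

lemma sparse_of_subset {n s : ℕ} {x : Fin n → ℝ} (W : Finset (Fin n)) (hW : W.card ≤ s)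
    (h : ∀ i ∉ W, x i = 0) : sparse s x := by
  refine (Finset.card_le_card ?_).trans hW
  intro i hi
  by_contra hc
  exact (Finset.mem_filter.1 hi).2 (h i hc)

/-- On an index set `W` of size at most `s`, `AᵀA` differs from the identity by at most `δ` in
operator norm. -/
lemma sum_sub_sq_le {m n s : ℕ} {A : Matrix (Fin m) (Fin n) ℝ} {δ : ℝ} (hA : RIC A s δ)
    (v : Fin n → ℝ) (W U : Finset (Fin n)) (hW : W.card ≤ s) (hv : ∀ i ∉ W, v i = 0)
    (hU : U ⊆ W) :
    ∑ i ∈ U, (v i - (Aᵀ *ᵥ (A *ᵥ v)) i) ^ 2 ≤ δ ^ 2 * nrm v ^ 2 := by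
  obtain ⟨h0, -, hA⟩ := hA
  set b : Fin n → ℝ := restr (v - Aᵀ *ᵥ (A *ᵥ v)) U with hb
  have hbW : ∀ i ∉ W, b i = 0 := fun i hi => by
    simp only [hb, restr]
    rw [if_neg (fun h => hi (hU h))]
  have hbb : ∑ i ∈ U, (v i - (Aᵀ *ᵥ (A *ᵥ v)) i) ^ 2 = b ⬝ᵥ b := by
    simp [hb, restr, dotProduct, sq]
  have hbv : b ⬝ᵥ v - (A *ᵥ b) ⬝ᵥ (A *ᵥ v) = b ⬝ᵥ b := by
    have : (A *ᵥ b) ⬝ᵥ (A *ᵥ v) = b ⬝ᵥ (Aᵀ *ᵥ (A *ᵥ v)) := by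
      rw [Matrix.dotProduct_mulVec b, Matrix.vecMul_transpose]
    rw [this, ← dotProduct_sub]
    simp only [dotProduct]
    refine Finset.sum_congr rfl fun i _ => ?_
    by_cases hi : i ∈ U <;> simp [hb, restr, hi]
  -- polarization: the isometry bounds at `v ± c b`, for a scaling `c` chosen afterwards
  have key : ∀ c : ℝ, 2 * c * (b ⬝ᵥ b) ≤ δ * (v ⬝ᵥ v + c ^ 2 * (b ⬝ᵥ b)) := by
    intro c
    have e1 := (hA (v + c • b) (sparse_of_subset W hW fun i hi => by simp [hv i hi, hbW i hi])).1
    have e2 := (hA (v - c • b) (sparse_of_subset W hW fun i hi => by simp [hv i hi, hbW i hi])).2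
    simp only [nrm_sq_dot, Matrix.mulVec_add, Matrix.mulVec_sub, Matrix.mulVec_smul,
      dotProduct_add, add_dotProduct, dotProduct_sub, sub_dotProduct, smul_dotProduct,
      dotProduct_smul, smul_eq_mul, dotProduct_comm v b,
      dotProduct_comm (A *ᵥ v) (A *ᵥ b)] at e1 e2
    linear_combination (1 / 2) * e1 + (1 / 2) * e2 - 2 * c * hbv
  rw [hbb, nrm_sq_dot]
  rcases h0.eq_or_lt with h | h
  · have := key 1
    rw [← h] at this ⊢
    linarith
  · have := mul_le_mul_of_nonneg_left (key (1 / δ)) h.le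
    have h' : δ * (2 * (1 / δ) * (b ⬝ᵥ b)) = 2 * (b ⬝ᵥ b) := by field_simp
    have h'' : δ * (δ * (v ⬝ᵥ v + (1 / δ) ^ 2 * (b ⬝ᵥ b))) = δ ^ 2 * (v ⬝ᵥ v) + b ⬝ᵥ b := by
      field_simp
    linarith

lemma sum_le_sum_of_dom {ι : Type*} (f : ι → ℝ) (D T : Finset ι) (hc : D.card = T.card)
    (h : ∀ i ∈ T, ∀ j ∈ D, f j ≤ f i) : ∑ j ∈ D, f j ≤ ∑ i ∈ T, f i := by
  rcases D.eq_empty_or_nonempty with rfl | hD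
  · obtain rfl : T = ∅ := by simpa using hc.symm
    simp
  · obtain ⟨d, hd, hmax⟩ := D.exists_max_image f hD
    calc ∑ j ∈ D, f j ≤ D.card • f d := Finset.sum_le_card_nsmul _ _ _ hmax
      _ = T.card • f d := by rw [hc]
      _ ≤ _ := Finset.card_nsmul_le_sum _ _ _ fun i hi => h i hi d hd

/-- Thresholding at level `q ≥ 2k` costs only a factor `2` (in squared norm) on a set `S`
of `k` indices containing the support of `v` up to `k` further indices `X`. -/
lemma sum_threshold_le {m n k q : ℕ} (hq : 2 * k ≤ q) {A : Matrix (Fin m) (Fin n) ℝ} {δ : ℝ}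
    (hA : RIC A (3 * k) δ) (v h : Fin n → ℝ) (S X Ω : Finset (Fin n)) (hS : S.card = k)
    (hX : X.card ≤ k) (hv : ∀ i ∉ S ∪ X, v i = 0) (hh : IsHT q (Aᵀ *ᵥ (A *ᵥ v)) h Ω) :
    ∑ i ∈ S, (v i - h i) ^ 2 ≤ 2 * (δ ^ 2 * nrm v ^ 2) := by
  obtain ⟨hΩ, hin, hout, hdom⟩ := hh
  set z := Aᵀ *ᵥ (A *ᵥ v) with hz
  have c1 : (S ∩ Ω).card + (S \ Ω).card = S.card := Finset.card_inter_add_card_sdiff S Ω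
  have c2 : (Ω ∩ (S ∪ X)).card + (Ω \ (S ∪ X)).card = Ω.card :=
    Finset.card_inter_add_card_sdiff _ _
  have c3 : (Ω ∩ (S ∪ X)).card ≤ (S ∩ Ω).card + X.card := by
    refine (Finset.card_le_card ?_).trans (Finset.card_union_le _ _)
    intro i hi
    simp only [Finset.mem_inter, Finset.mem_union] at hi ⊢
    tauto
  obtain ⟨T, hT, hTc⟩ := Finset.exists_subset_card_eq
    (s := Ω \ (S ∪ X)) (n := (S \ Ω).card) (by omega)
  have hTmem : ∀ i ∈ T, i ∈ Ω ∧ i ∉ S ∪ X := fun i hi => Finset.mem_sdiff.1 (hT hi)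
  have hST : Disjoint S T := Finset.disjoint_left.2 fun i hi hi' =>
    (hTmem i hi').2 (Finset.mem_union_left _ hi)
  have hW : ((S ∪ X) ∪ T).card ≤ 3 * k := by
    have := Finset.card_union_le (S ∪ X) T
    have := Finset.card_union_le S X
    omega
  have main := sum_sub_sq_le hA v ((S ∪ X) ∪ T) (S ∪ T) hW
    (fun i hi => hv i fun h' => hi (Finset.mem_union_left _ h'))
    (Finset.union_subset_union_left Finset.subset_union_left)
  rw [← hz, Finset.sum_union hST] at main
  have hzT : ∑ j ∈ S \ Ω, z j ^ 2 ≤ ∑ i ∈ T, (v i - z i) ^ 2 := by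
    calc ∑ j ∈ S \ Ω, z j ^ 2 ≤ ∑ i ∈ T, z i ^ 2 :=
          sum_le_sum_of_dom (fun i => z i ^ 2) _ _ hTc.symm fun i hi j hj =>
            sq_le_sq.2 (hdom i (hTmem i hi).1 j (Finset.mem_sdiff.1 hj).2)
      _ = _ := Finset.sum_congr rfl fun i hi => by rw [hv i (hTmem i hi).2]; ring
  have s1 := Finset.sum_inter_add_sum_sdiff S Ω (fun i => (v i - h i) ^ 2)
  have s2 := Finset.sum_inter_add_sum_sdiff S Ω (fun i => (v i - z i) ^ 2)
  have b1 : ∑ i ∈ S ∩ Ω, (v i - h i) ^ 2 ≤ 2 * ∑ i ∈ S ∩ Ω, (v i - z i) ^ 2 := by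
    rw [Finset.mul_sum]
    refine Finset.sum_le_sum fun i hi => ?_
    rw [hin i (Finset.mem_inter.1 hi).2]
    nlinarith [sq_nonneg (v i - z i)]
  have b2 : ∑ i ∈ S \ Ω, (v i - h i) ^ 2
      ≤ 2 * ∑ i ∈ S \ Ω, (v i - z i) ^ 2 + 2 * ∑ i ∈ S \ Ω, z i ^ 2 := by
    rw [Finset.mul_sum, Finset.mul_sum, ← Finset.sum_add_distrib]
    refine Finset.sum_le_sum fun i hi => ?_
    rw [hout i (Finset.mem_sdiff.1 hi).2]
    nlinarith [sq_nonneg (v i - 2 * z i)]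
  linarith

lemma card_support_of_sum {n k : ℕ} (w : Fin n → ℝ) (hw : ∀ i, w i = 0 ∨ w i = 1)
    (hs : ∑ i, w i = (k : ℝ)) : (suppF w).card = k := by
  have : ∑ i, w i = ((suppF w).card : ℝ) := by
    rw [suppF, Finset.card_filter]
    push_cast
    refine Finset.sum_congr rfl fun i _ => ?_
    rcases hw i with h | h <;> simp [h]
  exact_mod_cast this.symm.trans hs

/-- One step of the iteration: testing the optimal selection `w` against the indicator of a
`k`-element superset of the support of `xs` bounds the new error by the old one. -/
lemma step {m n k q : ℕ} (hq : 2 * k ≤ q) {A : Matrix (Fin m) (Fin n) ℝ} {δ : ℝ}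
    (hA : RIC A (3 * k) δ) (xs : Fin n → ℝ) (hxs : sparse k xs) (x h w : Fin n → ℝ)
    (hx : sparse k x) (Ω : Finset (Fin n))
    (hh : IsHT q (Aᵀ *ᵥ (A *ᵥ xs - A *ᵥ x)) h Ω)
    (hw : ∀ i, w i = 0 ∨ w i = 1) (hws : ∑ i, w i = (k : ℝ))
    (hmin : ∀ w' : Fin n → ℝ, (∀ i, w' i = 0 ∨ w' i = 1) → (∑ i, w' i) = (k : ℝ) →
      nrm (A *ᵥ xs - A *ᵥ (fun i => (x i + h i) * w i)) ^ 2 ≤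
        nrm (A *ᵥ xs - A *ᵥ (fun i => (x i + h i) * w' i)) ^ 2) :
    (1 - δ) * nrm (xs - fun i => (x i + h i) * w i) ^ 2 ≤
      2 * δ ^ 2 * (1 + δ) * nrm (xs - x) ^ 2 := by
  have hkn : k ≤ Fintype.card (Fin n) := by
    have := Finset.card_le_univ Ω
    have := hh.1
    omega
  obtain ⟨S, hxS, hS⟩ := Finset.exists_superset_card_eq hxs hkn
  have hxs0 : ∀ i ∉ S, xs i = 0 := fun i hi => by
    by_contra hc
    exact hi (hxS (by simpa using hc))
  rw [← Matrix.mulVec_sub] at hh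
  have thr := sum_threshold_le hq hA (xs - x) h S (suppF x) Ω hS hx (fun i hi => by
    simp only [Finset.mem_union, suppF, Finset.mem_filter, Finset.mem_univ, true_and,
      not_or, not_not] at hi
    simp [hxs0 i hi.1, hi.2]) hh
  have hm := hmin (fun i => if i ∈ S then 1 else 0)
    (fun i => by by_cases hi : i ∈ S <;> simp [hi]) (by simp [hS])
  rw [← Matrix.mulVec_sub, ← Matrix.mulVec_sub] at hm
  have lo := (hA.2.2 (xs - fun i => (x i + h i) * w i) (sparse_of_subset (S ∪ suppF w)
    (by
      have := Finset.card_union_le S (suppF w)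
      rw [card_support_of_sum w hw hws] at this
      omega)
    (fun i hi => by
      simp only [Finset.mem_union, suppF, Finset.mem_filter, Finset.mem_univ, true_and,
        not_or, not_not] at hi
      simp [hxs0 i hi.1, hi.2]))).1
  have hi' := (hA.2.2 (xs - fun i => (x i + h i) * (if i ∈ S then 1 else 0))
    (sparse_of_subset S (by omega) (fun i hi => by simp [hxs0 i hi, hi]))).2
  have hn : nrm (xs - fun i => (x i + h i) * (if i ∈ S then 1 else 0)) ^ 2
      = ∑ i ∈ S, ((xs - x) i - h i) ^ 2 := by
    rw [nrm_sq, ← Finset.sum_subset (Finset.subset_univ S)]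
    · refine Finset.sum_congr rfl fun i hi => ?_
      simp only [Pi.sub_apply, if_pos hi]
      ring
    · intro i _ hi
      simp [hxs0 i hi, hi]
  rw [hn] at hi'
  have := mul_le_mul_of_nonneg_left thr (by linarith [hA.1] : 0 ≤ 1 + δ)
  linarith

theorem stmt6 {m n : ℕ} (k q : ℕ) (hk : 0 < k) (hq : 2 * k ≤ q)
    (A : Matrix (Fin m) (Fin n) ℝ)
    (xs : Fin n → ℝ) (hxs : sparse k xs)
    (y : Fin m → ℝ) (hy : y = A.mulVec xs)
    (t : ℕ) (ht : t = ⌈(q : ℝ) / (k : ℝ)⌉₊)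
    (δ₁ δ₂ δ₃ : ℝ) (h1 : RIC A k δ₁) (h2 : RIC A (2 * k) δ₂) (h3 : RIC A (3 * k) δ₃)
    (h12 : δ₁ ≤ δ₂) (h23 : δ₂ ≤ δ₃)
    (α : ℝ) (hα : α ∈ Set.Ioo (0 : ℝ) 1)
    (hroot : ((t : ℝ) + 1) ^ 2 * α ^ 3 + ((t : ℝ) + 1) ^ 2 * α ^ 2 +
      2 / (3 + Real.sqrt 5) * α - 2 / (3 + Real.sqrt 5) = 0)
    (huniq : ∀ β ∈ Set.Ioo (0 : ℝ) 1,
      ((t : ℝ) + 1) ^ 2 * β ^ 3 + ((t : ℝ) + 1) ^ 2 * β ^ 2 +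
        2 / (3 + Real.sqrt 5) * β - 2 / (3 + Real.sqrt 5) = 0 → β = α)
    (hδ : δ₃ < α)
    (x : ℕ → Fin n → ℝ) (hx : IsPGOTSeq A y k q x) :
    Filter.Tendsto x Filter.atTop (nhds xs) := by
  have hk' : (0 : ℝ) < k := by exact_mod_cast hk
  have ht2 : (2 : ℝ) ≤ t := by
    have h2q : (2 : ℝ) ≤ (q : ℝ) / k := by
      rw [le_div_iff₀ hk']
      exact_mod_cast hq
    rw [ht]
    exact h2q.trans (Nat.le_ceil _)
  have hδ0 := h3.1
  have hδ1 : 0 < 1 - δ₃ := by linarith [h3.2.1]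
  have hcontr : 2 * δ₃ ^ 2 * (1 + δ₃) < 1 - δ₃ := by
    obtain ⟨a0, a1⟩ := hα
    have hc : 2 / (3 + Real.sqrt 5) ≤ 1 := by
      rw [div_le_one (by positivity)]
      linarith [Real.sqrt_nonneg 5]
    have e1 : δ₃ ^ 2 * (1 + δ₃) ≤ α ^ 2 * (1 + α) := by gcongr
    have e2 : 2 * (α ^ 2 * (1 + α)) ≤ ((t : ℝ) + 1) ^ 2 * (α ^ 2 * (1 + α)) := by
      gcongr
      nlinarith
    have e3 : 2 / (3 + Real.sqrt 5) * (1 - α) ≤ 1 * (1 - α) := by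
      gcongr
    linarith
  obtain ⟨hx0, hstep⟩ := hx
  subst hy
  have hsp : ∀ p, sparse k (x p) := by
    intro p
    cases p with
    | zero => rw [hx0]; exact sparse_of_subset ∅ (by simp) (by simp)
    | succ p =>
      obtain ⟨h, Ω, w, -, hw, hws, -, he⟩ := hstep p
      rw [he]
      refine sparse_of_subset (suppF w) (card_support_of_sum w hw hws).le fun i hi => ?_
      have : w i = 0 := by simpa [suppF] using hi
      simp [this]
  set ρ := 2 * δ₃ ^ 2 * (1 + δ₃) / (1 - δ₃) with hρ
  have hρ0 : 0 ≤ ρ := by positivity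
  have hρ1 : ρ < 1 := (div_lt_one hδ1).2 hcontr
  have hrec : ∀ p, nrm (xs - x p) ^ 2 ≤ ρ ^ p * nrm (xs - x 0) ^ 2 := by
    intro p
    induction p with
    | zero => simp
    | succ p ih =>
      obtain ⟨h, Ω, w, hh, hw, hws, hmin, he⟩ := hstep p
      have hs := step hq h3 xs hxs (x p) h w (hsp p) Ω hh hw hws hmin
      rw [← he] at hs
      calc nrm (xs - x (p + 1)) ^ 2 ≤ ρ * nrm (xs - x p) ^ 2 := by
            rw [hρ, div_mul_eq_mul_div, le_div_iff₀ hδ1]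
            linarith
        _ ≤ ρ * (ρ ^ p * nrm (xs - x 0) ^ 2) := by gcongr
        _ = _ := by ring
  have hlim : Tendsto (fun p => ρ ^ p * nrm (xs - x 0) ^ 2) atTop (nhds 0) := by
    simpa using (tendsto_pow_atTop_nhds_zero_of_lt_one hρ0 hρ1).mul_const (nrm (xs - x 0) ^ 2)
  rw [tendsto_pi_nhds]
  intro i
  have hsq : Tendsto (fun p => (x p i - xs i) ^ 2) atTop (nhds 0) := by
    refine squeeze_zero (fun _ => sq_nonneg _) (fun p => ?_) hlim
    refine le_trans ?_ (hrec p)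
    rw [nrm_sq]
    have := Finset.single_le_sum (f := fun j => (xs - x p) j ^ 2)
      (fun j _ => sq_nonneg _) (Finset.mem_univ i)
    simp only [Pi.sub_apply] at this ⊢
    linarith [sub_sq_comm (x p i) (xs i)]
  have habs : Tendsto (fun p => |x p i - xs i|) atTop (nhds 0) := by
    simpa [Real.sqrt_sq_eq_abs] using hsq.sqrt
  exact tendsto_iff_norm_sub_tendsto_zero.2 habs
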